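/- Let G be a simple graph, H a connected subgraph of G, and j ≥ 1 an integer. Let G_j be the graph obtained from G by replacing every edge e = {u,v} of G that is not an edge of H by a path u = p₀^e, p₁^e, …, p_j^e = v consisting of j edges through j−1 new internal vertices (distinct for different edges), keeping all vertices of G and all edges of H. Then G admits a retraction to H with stretch at most j if and only if G_j admits a retraction to H with stretch at most 1. -/

import Mathlib

/-- The vertex type of the graph `G_j` obtained from `G` by replacing each edge of `G`
not in `H` by a path of `j` edges: the original vertices together with `j − 1` new
internal vertices for each replaced edge. -/
def SubdivVerts {V : Type*} (G : SimpleGraph V) (H : G.Subgraph) (j : ℕ) : Type _ :=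
  V ⊕ ({e : Sym2 V // e ∈ G.edgeSet ∧ e ∉ H.edgeSet} × Fin (j - 1))

/-- The graph `G_j`: each edge `e = {u,v}` of `G` not in `H` is replaced by a path
`u = p₀, p₁, …, p_j = v` of `j` edges through the `j − 1` new internal vertices
associated to `e` (where `(u, v) = Quot.out e` is a fixed ordering of the endpoints
of `e`); all vertices of `G` and all edges of `H` are kept.  (For `j = 1`, the
replaced edges are kept as they are.) -/
def subdividedGraph {V : Type*} (G : SimpleGraph V) (H : G.Subgraph) (j : ℕ) :
    SimpleGraph (SubdivVerts G H j) :=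
  SimpleGraph.fromRel (fun w w' =>
    match w, w' with
    | .inl u, .inl v => H.Adj u v ∨ (j = 1 ∧ G.Adj u v ∧ ¬H.Adj u v)
    | .inl u, .inr (e, i) =>
        (i.val = 0 ∧ u = (Quot.out e.val).1) ∨ (i.val + 2 = j ∧ u = (Quot.out e.val).2)
    | .inr (e, i), .inr (e', i') => e = e' ∧ i'.val = i.val + 1
    | .inr _, .inl _ => False)

namespace SimpleGraph

/-- In a connected graph, two vertices are within distance `1` exactly when they are equal or
adjacent. -/
lemma Connected.dist_le_one_iff {W : Type*} {K : SimpleGraph W} (hK : K.Connected) {x y : W} :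
    K.dist x y ≤ 1 ↔ x = y ∨ K.Adj x y := by
  rw [Nat.le_one_iff_eq_zero_or_eq_one, hK.dist_eq_zero_iff, dist_eq_one_iff_adj]

/-- In a connected graph, a sequence starting at `p 0` whose first `n` steps either stay put or
follow an edge ends within distance `n` of `p 0`. -/
lemma Connected.dist_le_of_lazy_steps {W : Type*} {K : SimpleGraph W} (hK : K.Connected)
    {p : ℕ → W} {n : ℕ} (hp : ∀ i < n, p i = p (i + 1) ∨ K.Adj (p i) (p (i + 1))) :
    K.dist (p 0) (p n) ≤ n := by
  induction n with
  | zero => simp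
  | succ n ih =>
    have := ih fun i hi => hp i (by omega)
    have := hK.dist_le_one_iff.2 (hp n n.lt_succ_self)
    have := hK.dist_triangle (u := p 0) (v := p n) (w := p (n + 1))
    omega

/-- In a connected graph, two vertices at distance at most `n` are joined by a sequence of exactly
`n` steps, each of which stays put or follows an edge. -/
lemma Connected.exists_lazy_steps {W : Type*} {K : SimpleGraph W} (hK : K.Connected)
    {x y : W} {n : ℕ} (h : K.dist x y ≤ n) :
    ∃ p : ℕ → W, p 0 = x ∧ p n = y ∧ ∀ i, p i = p (i + 1) ∨ K.Adj (p i) (p (i + 1)) := by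
  obtain ⟨w, hw⟩ := hK.exists_walk_length_eq_dist x y
  refine ⟨w.getVert, w.getVert_zero, w.getVert_of_length_le (hw ▸ h), fun i => ?_⟩
  rcases lt_or_ge i w.length with hi | hi
  · exact .inr (w.adj_getVert_succ hi)
  · left
    rw [w.getVert_of_length_le hi, w.getVert_of_length_le (by omega)]

/-- To check that a map sends the edges of `fromRel r` to edges or vertices, it suffices to check
the pairs related by `r`. -/
lemma forall_fromRel_adj_eq_or_adj {U W : Type*} {r : U → U → Prop} {K : SimpleGraph W}
    {g : U → W} (h : ∀ x y, r x y → g x = g y ∨ K.Adj (g x) (g y)) (x y : U)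
    (hxy : (fromRel r).Adj x y) : g x = g y ∨ K.Adj (g x) (g y) := by
  rcases ((fromRel_adj r x y).1 hxy).2 with hr | hr
  · exact h x y hr
  · exact (h y x hr).imp Eq.symm SimpleGraph.Adj.symm

/-- The chosen ordered endpoints of an edge of `G` are adjacent in `G`. -/
lemma adj_quot_out {V : Type*} {G : SimpleGraph V} {e : Sym2 V}
    (he : e ∈ G.edgeSet) : G.Adj (Quot.out e).1 (Quot.out e).2 := by
  have hout : s((Quot.out e).1, (Quot.out e).2) = e := Quot.out_eq e
  rwa [← mem_edgeSet, hout]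

end SimpleGraph

/-- A map out of the subdivided graph with connected target of stretch at most `1` has stretch at
most `j` on the endpoints of each subdivided edge. -/
lemma dist_quot_out_le_of_subdividedGraph {V W : Type*} {G : SimpleGraph V} {H : G.Subgraph}
    {j : ℕ} (hj : 2 ≤ j) {K : SimpleGraph W} (hK : K.Connected) (g : SubdivVerts G H j → W)
    (hg : ∀ w w', (subdividedGraph G H j).Adj w w' → g w = g w' ∨ K.Adj (g w) (g w'))
    (e : {e : Sym2 V // e ∈ G.edgeSet ∧ e ∉ H.edgeSet}) :
    K.dist (g (.inl (Quot.out e.val).1)) (g (.inl (Quot.out e.val).2)) ≤ j := by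
  let p : ℕ → SubdivVerts G H j := fun i =>
    if i = 0 then .inl (Quot.out e.val).1
    else if h : i - 1 < j - 1 then .inr (e, ⟨i - 1, h⟩) else .inl (Quot.out e.val).2
  have hp_mid (i : ℕ) (hi : i < j - 1) : p (i + 1) = .inr (e, ⟨i, hi⟩) :=
    (if_neg i.succ_ne_zero).trans (dif_pos hi)
  have hp_zero : p 0 = .inl (Quot.out e.val).1 := if_pos rfl
  have hp_last : p j = .inl (Quot.out e.val).2 :=
    (if_neg (by omega)).trans (dif_neg (lt_irrefl _))
  have hstep (i : ℕ) (hi : i < j) : (subdividedGraph G H j).Adj (p i) (p (i + 1)) := by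
    rw [subdividedGraph, SimpleGraph.fromRel_adj]
    rcases i with _ | i
    · rw [hp_zero, hp_mid 0 (by omega)]
      exact ⟨Sum.inl_ne_inr, .inl (.inl ⟨rfl, rfl⟩)⟩
    · rw [hp_mid i (by omega)]
      by_cases h : i + 1 < j - 1
      · rw [hp_mid (i + 1) h]
        refine ⟨fun h' => ?_, .inl ⟨rfl, rfl⟩⟩
        have := congrArg (fun x => x.2.val) (Sum.inr_injective h')
        simp at this
      · obtain rfl : i + 1 + 1 = j := by omega
        rw [hp_last]
        exact ⟨Sum.inr_ne_inl, .inr (.inr ⟨rfl, rfl⟩)⟩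
  have := hK.dist_le_of_lazy_steps (p := g ∘ p) fun i hi => hg _ _ (hstep i hi)
  simpa only [Function.comp_apply, hp_zero, hp_last] using this

/-- A map of stretch at most `j` from `G` to a connected graph, which sends edges of `H` to edges
or vertices, extends to the subdivided graph with stretch at most `1`. -/
lemma exists_extension_subdividedGraph {V W : Type*} {G : SimpleGraph V} {H : G.Subgraph}
    {j : ℕ} {K : SimpleGraph W} (hK : K.Connected) (f : V → W)
    (hH : ∀ u v, H.Adj u v → f u = f v ∨ K.Adj (f u) (f v))
    (hf : ∀ u v, G.Adj u v → K.dist (f u) (f v) ≤ j) :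
    ∃ g : SubdivVerts G H j → W, (∀ v, g (.inl v) = f v) ∧
      ∀ w w', (subdividedGraph G H j).Adj w w' → g w = g w' ∨ K.Adj (g w) (g w') := by
  choose p hp_zero hp_last hp using
    fun e : {e : Sym2 V // e ∈ G.edgeSet ∧ e ∉ H.edgeSet} =>
      hK.exists_lazy_steps (hf _ _ (SimpleGraph.adj_quot_out e.2.1))
  refine ⟨Sum.elim f fun x => p x.1 (x.2.val + 1), fun _ => rfl,
    SimpleGraph.forall_fromRel_adj_eq_or_adj fun w w' h => ?_⟩
  simp only [← hK.dist_le_one_iff] at hH hp ⊢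
  rcases w with u | ⟨e, i⟩ <;> rcases w' with v | ⟨e', i'⟩
  · rcases h with h | ⟨rfl, h, -⟩
    · exact hH _ _ h
    · exact hf _ _ h
  · rcases h with ⟨hi, rfl⟩ | ⟨hi, rfl⟩
    · simpa [hi, hp_zero] using hp e' 0
    · rw [SimpleGraph.dist_comm]
      simpa [hi, hp_last] using hp e' (i'.val + 1)
  · exact h.elim
  · obtain ⟨rfl, hi⟩ := h
    simpa [hi] using hp e (i.val + 1)

/-- Let `H` be a connected subgraph of `G` and `j ≥ 1`.  Then `G`
admits a retraction to `H` of stretch at most `j` if and only if the subdivided graph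
`G_j` admits a retraction to `H` of stretch 1 (i.e. every edge is mapped to a single
vertex of `H` or to an edge of `H`). -/
theorem retraction_iff_subdivided_stretch_one {V : Type*} (G : SimpleGraph V)
    (H : G.Subgraph) (hH : H.coe.Connected) (j : ℕ) (hj : 1 ≤ j) :
    (∃ f : V → H.verts, (∀ a : H.verts, f (a : V) = a) ∧
        ∀ u v : V, G.Adj u v → H.coe.dist (f u) (f v) ≤ j) ↔
    (∃ g : SubdivVerts G H j → H.verts,
        (∀ a : H.verts, g (Sum.inl (a : V)) = a) ∧
        ∀ w w' : SubdivVerts G H j, (subdividedGraph G H j).Adj w w' →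
          g w = g w' ∨ H.coe.Adj (g w) (g w')) := by
  constructor
  · rintro ⟨f, hfix, hf⟩
    obtain ⟨g, hgf, hg⟩ := exists_extension_subdividedGraph (H := H) hH f (fun u v h => by
      rw [hfix ⟨u, H.edge_vert h⟩, hfix ⟨v, H.edge_vert h.symm⟩]
      exact .inr h) hf
    exact ⟨g, fun a => (hgf a).trans (hfix a), hg⟩
  · rintro ⟨g, hfix, hg⟩
    refine ⟨fun v => g (.inl v), hfix, fun u v huv => ?_⟩
    by_cases hbase : j = 1 ∨ H.Adj u v
    · refine (hH.dist_le_one_iff.2 (hg _ _ ?_)).trans hj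
      refine (SimpleGraph.fromRel_adj _ _ _).2 ⟨fun h => huv.ne (Sum.inl_injective h), .inl ?_⟩
      change H.Adj u v ∨ (j = 1 ∧ G.Adj u v ∧ ¬H.Adj u v)
      tauto
    · obtain ⟨hj_ne, hnot⟩ := not_or.1 hbase
      have hle := dist_quot_out_le_of_subdividedGraph (by omega) hH g hg
        ⟨s(u, v), huv, hnot⟩
      have hout : s((Quot.out s(u, v)).1, (Quot.out s(u, v)).2) = s(u, v) := Quot.out_eq _
      rcases Sym2.eq_iff.1 hout with ⟨h₁, h₂⟩ | ⟨h₁, h₂⟩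
      · simpa only [h₁, h₂] using hle
      · rw [SimpleGraph.dist_comm]
        simpa only [h₁, h₂] using hle
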